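/- Let V be a vector space over ℝ, let n ≥ 1 be an integer, let T be a symmetric 2n-multilinear form on V, let q be a symmetric bilinear form on V, and let c > 0 be a real number. Assume the Fujiki-type identity T(η, η, …, η) = c · q(η,η)ⁿ holds for every η ∈ V. Let L, P ∈ V satisfy q(L,L) = 0 and q(P,L) > 0. Then there exists an integer k such that q(P − k·L, P − k·L) > 0 and T(P − k·L, …, P − k·L) ≤ C(2n,n) · T(P,…,P,L,…,L), where the last expression denotes T evaluated with n arguments equal to P and n arguments equal to L, and C(2n,n) is the binomial coefficient (2n choose n). -/

import Mathlib

/-! Both sides of `T(x + t y, …, x + t y) = c · q(x + t y, x + t y) ^ n` are polynomials in `t`. If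
`q(y, y) = 0`, then `q(x + t y, x + t y)` is affine in `t` with slope `2 q(x, y)`, and comparing the
coefficients of `t ^ n` gives `C(2n, n) · T(x, …, x, y, …, y) = c · (2 q(x, y)) ^ n`. The values
`q(x - k y, x - k y)` for integers `k` form an arithmetic progression with step `2 q(x, y)`, so one
of them lies in the half-open interval `(0, 2 q(x, y)]`, where `c · q ^ n ≤ c · (2 q(x, y)) ^ n`. -/

open Polynomial

section LinePolynomial

variable {R V ι : Type*} [CommSemiring R] [AddCommMonoid V] [Module R V] [DecidableEq ι]

theorem map_piecewise_const_eq_of_card_eq [Finite ι] {T : MultilinearMap R (fun _ : ι => V) R}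
    (hT : ∀ (σ : Equiv.Perm ι) (f : ι → V), T (f ∘ σ) = T f) (x y : V) {s t : Finset ι}
    (hst : s.card = t.card) :
    T (s.piecewise (fun _ => y) fun _ => x) = T (t.piecewise (fun _ => y) fun _ => x) := by
  obtain ⟨σ, hσ⟩ : ∃ σ : Equiv.Perm ι, ∀ i, σ i ∈ t ↔ i ∈ s := by
    let e := Finset.equivOfCardEq hst
    exact ⟨e.extendSubtype, fun i => ⟨not_imp_not.mp (e.extendSubtype_not_mem i),
      e.extendSubtype_mem i⟩⟩
  rw [← hT σ (t.piecewise _ _)]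
  congr 1
  ext i
  simp only [Finset.piecewise, Function.comp_apply, hσ]

variable [Fintype ι]

/-- The restriction of the form `v ↦ T(v, …, v)` to the affine line `t ↦ x + t y`, as a polynomial
in `t`. The sum runs over the sets `s` of arguments of `T` that receive `y`. -/
noncomputable def linePolynomial (T : MultilinearMap R (fun _ : ι => V) R) (x y : V) : R[X] :=
  ∑ s : Finset ι, C (T (s.piecewise (fun _ => y) fun _ => x)) * X ^ s.card

theorem eval_linePolynomial (T : MultilinearMap R (fun _ : ι => V) R) (x y : V) (t : R) :
    (linePolynomial T x y).eval t = T fun _ => x + t • y := by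
  have map_piecewise_smul_right (s : Finset ι) :
      T (s.piecewise (fun _ => t • y) fun _ => x) =
        t ^ s.card * T (s.piecewise (fun _ => y) fun _ => x) := by
    have h := T.map_piecewise_smul (fun _ => t) (s.piecewise (fun _ => y) fun _ => x) s
    rw [Finset.prod_const, smul_eq_mul] at h
    rw [← h]
    congr 1
    ext i
    by_cases hi : i ∈ s <;> simp [hi]
  calc (linePolynomial T x y).eval t
      = ∑ s : Finset ι, T (s.piecewise (fun _ => t • y) fun _ => x) := by
        simp only [linePolynomial, eval_finsetSum, eval_mul, eval_C, eval_pow, eval_X,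
          map_piecewise_smul_right, mul_comm]
    _ = T ((fun _ => t • y) + fun _ => x) := (T.map_add_univ _ _).symm
    _ = T fun _ => x + t • y := by simp only [Pi.add_def, add_comm]

theorem coeff_linePolynomial (T : MultilinearMap R (fun _ : ι => V) R) (x y : V) (k : ℕ) :
    (linePolynomial T x y).coeff k =
      ∑ s ∈ Finset.univ.powersetCard k, T (s.piecewise (fun _ => y) fun _ => x) := by
  simp only [linePolynomial, finsetSum_coeff, coeff_C_mul, coeff_X_pow, mul_ite, mul_one, mul_zero,
    ← Finset.sum_filter, ← Finset.powerset_univ, Finset.powersetCard_eq_filter, eq_comm]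

theorem coeff_card_linePolynomial {T : MultilinearMap R (fun _ : ι => V) R}
    (hT : ∀ (σ : Equiv.Perm ι) (f : ι → V), T (f ∘ σ) = T f) (x y : V) (s : Finset ι) :
    (linePolynomial T x y).coeff s.card =
      (Fintype.card ι).choose s.card * T (s.piecewise (fun _ => y) fun _ => x) := by
  rw [coeff_linePolynomial, Finset.sum_eq_card_nsmul fun t ht =>
      map_piecewise_const_eq_of_card_eq hT x y (Finset.mem_powersetCard.mp ht).2,
    Finset.card_powersetCard, Finset.card_univ, nsmul_eq_mul]

end LinePolynomial

theorem bilinForm_add_smul_self_of_isotropic {R V : Type*} [CommSemiring R] [AddCommMonoid V]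
    [Module R V] {q : LinearMap.BilinForm R V} (hq : q.IsSymm) {y : V} (hy : q y y = 0) (x : V)
    (t : R) : q (x + t • y) (x + t • y) = 2 * q x y * t + q x x := by
  simp only [map_add, map_smul, LinearMap.add_apply, LinearMap.smul_apply, smul_eq_mul, hy,
    hq.eq y x]
  ring

theorem choose_mul_map_piecewise_eq_of_fujiki {R V ι : Type*} [CommRing R] [IsDomain R] [Infinite R]
    [AddCommGroup V] [Module R V] [Fintype ι] [DecidableEq ι]
    {T : MultilinearMap R (fun _ : ι => V) R}
    (hT : ∀ (σ : Equiv.Perm ι) (f : ι → V), T (f ∘ σ) = T f)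
    {q : LinearMap.BilinForm R V} (hq : q.IsSymm) {c : R} {s : Finset ι}
    (hFujiki : ∀ v : V, T (fun _ => v) = c * q v v ^ s.card) {y : V} (hy : q y y = 0) (x : V) :
    (Fintype.card ι).choose s.card * T (s.piecewise (fun _ => y) fun _ => x) =
      c * (2 * q x y) ^ s.card := by
  have linePolynomial_eq :
      linePolynomial T x y = C c * (C (2 * q x y) * X + C (q x x)) ^ s.card := by
    refine Polynomial.funext fun t => ?_
    rw [eval_linePolynomial, hFujiki, bilinForm_add_smul_self_of_isotropic hq hy]
    simp only [eval_mul, eval_C, eval_pow, eval_add, eval_X]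
  have coeff_linear_pow :
      ((C (2 * q x y) * X + C (q x x)) ^ s.card).coeff s.card = (2 * q x y) ^ s.card := by
    simpa using coeff_pow_of_natDegree_le (m := s.card)
      (natDegree_linear_le (a := 2 * q x y) (b := q x x))
  rw [← coeff_card_linePolynomial hT, linePolynomial_eq, coeff_C_mul, coeff_linear_pow]

section IntegralTwist

variable {R V : Type*} [CommRing R] [LinearOrder R] [IsStrictOrderedRing R] [Archimedean R]
  [AddCommGroup V] [Module R V]

theorem exists_int_bilinForm_sub_smul_self_mem_Ioc {q : LinearMap.BilinForm R V} (hq : q.IsSymm)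
    {x y : V} (hy : q y y = 0) (hxy : 0 < q x y) :
    ∃ k : ℤ, q (x - (k : R) • y) (x - (k : R) • y) ∈ Set.Ioc 0 (2 * q x y) := by
  obtain ⟨k, hk, -⟩ := existsUnique_sub_zsmul_mem_Ioc (mul_pos two_pos hxy) (q x x) 0
  have value_at_twist :
      q (x - (k : R) • y) (x - (k : R) • y) = q x x - k • (2 * q x y) := by
    rw [sub_eq_add_neg, ← neg_smul, bilinForm_add_smul_self_of_isotropic hq hy, zsmul_eq_mul]
    ring
  rw [zero_add] at hk
  exact ⟨k, value_at_twist ▸ hk⟩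

theorem fujiki_exists_twist_bounded_top_intersection_general {ι : Type*} [Fintype ι]
    [DecidableEq ι] {T : MultilinearMap R (fun _ : ι => V) R}
    (hT : ∀ (σ : Equiv.Perm ι) (f : ι → V), T (f ∘ σ) = T f)
    {q : LinearMap.BilinForm R V} (hq : q.IsSymm) {c : R} (hc : 0 ≤ c) {s : Finset ι}
    (hFujiki : ∀ v : V, T (fun _ => v) = c * q v v ^ s.card)
    {x y : V} (hy : q y y = 0) (hxy : 0 < q x y) :
    ∃ k : ℤ, 0 < q (x - (k : R) • y) (x - (k : R) • y) ∧
      T (fun _ => x - (k : R) • y) ≤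
        (Fintype.card ι).choose s.card * T (s.piecewise (fun _ => y) fun _ => x) := by
  obtain ⟨k, hpos, hle⟩ := exists_int_bilinForm_sub_smul_self_mem_Ioc hq hy hxy
  refine ⟨k, hpos, ?_⟩
  rw [hFujiki, choose_mul_map_piecewise_eq_of_fujiki hT hq hFujiki hy]
  gcongr

end IntegralTwist

theorem card_filter_not_val_lt_half (n : ℕ) :
    (Finset.univ.filter fun i : Fin (2 * n) => ¬ (i : ℕ) < n).card = n := by
  rw [← Finset.compl_filter, Finset.card_compl, Fin.card_filter_val_lt, Fintype.card_fin]
  lia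

theorem piecewise_filter_not_const {ι V : Type*} [Fintype ι] [DecidableEq ι] (p : ι → Prop)
    [DecidablePred p] (x y : V) :
    (Finset.univ.filter fun i => ¬ p i).piecewise (fun _ => y) (fun _ => x) =
      fun i => if p i then x else y := by
  ext i
  simp only [Finset.piecewise, Finset.mem_filter_univ, ite_not]

/-- **Key estimate in Theorem 3.5.** Let `V` be a real vector space, `T` a symmetric
`2n`-multilinear form, `q` a symmetric bilinear form, `c > 0`, and suppose the
Fujiki-type identity `T(η,…,η) = c · q(η,η)ⁿ` holds.  If `q(L,L) = 0` and
`q(P,L) > 0`, then there is an integer `k` such that `q(P−kL, P−kL) > 0` and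
`T(P−kL,…,P−kL) ≤ C(2n,n) · T(P,…,P,L,…,L)`. -/
theorem fujiki_exists_twist_bounded_top_intersection
    {V : Type*} [AddCommGroup V] [Module ℝ V] {n : ℕ} (hn : 1 ≤ n)
    (T : MultilinearMap ℝ (fun _ : Fin (2 * n) => V) ℝ)
    (hT_symm : ∀ (σ : Equiv.Perm (Fin (2 * n))) (f : Fin (2 * n) → V),
      T (f ∘ σ) = T f)
    (q : LinearMap.BilinForm ℝ V)
    (hq_symm : ∀ x y : V, q x y = q y x)
    (c : ℝ) (hc : 0 < c)
    (hFujiki : ∀ η : V, T (fun _ => η) = c * (q η η) ^ n)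
    (L P : V) (hL : q L L = 0) (hPL : 0 < q P L) :
    ∃ k : ℤ, 0 < q (P - (k : ℝ) • L) (P - (k : ℝ) • L) ∧
      T (fun _ => P - (k : ℝ) • L)
        ≤ (Nat.choose (2 * n) n : ℝ) * T (fun i => if (i : ℕ) < n then P else L) := by
  simpa only [Fintype.card_fin, card_filter_not_val_lt_half, piecewise_filter_not_const] using
    fujiki_exists_twist_bounded_top_intersection_general hT_symm ⟨hq_symm⟩ hc.le
      (s := Finset.univ.filter fun i : Fin (2 * n) => ¬ (i : ℕ) < n)
      (by rwa [card_filter_not_val_lt_half]) hL hPL
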